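/- (Lemma 2(a), concrete form) For every δ > 0 and γ > 0, every solution (xₐ, ȳₐ) of the cascade average system ẋₐ = −(γ/2)·b₁δ(xₐ), ẏ̄ₐ = −γ·ȳₐ + γ·a₀δ(xₐ)/2 on [0,∞) is bounded; moreover there exists x̂ ∈ [x* − δ, x* + δ] with b₁δ(x̂) = 0 such that xₐ(t) → x̂ and ȳₐ(t) → a₀δ(x̂)/2 as t → ∞. -/

import Mathlib

open Real MeasureTheory intervalIntegral Filter

/-- First Fourier sine coefficient of `t ↦ h (x + δ sin (2π t))`. -/
noncomputable def b1 (h : ℝ → ℝ) (δ x : ℝ) : ℝ :=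
  2 * ∫ t in (0:ℝ)..1, h (x + δ * Real.sin (2 * Real.pi * t)) * Real.sin (2 * Real.pi * t)

/-- Zeroth Fourier coefficient of `t ↦ h (x + δ sin (2π t))`. -/
noncomputable def a0 (h : ℝ → ℝ) (δ x : ℝ) : ℝ :=
  2 * ∫ t in (0:ℝ)..1, h (x + δ * Real.sin (2 * Real.pi * t))

/-!
A solution of a scalar autonomous equation `x' = F x` with `F` continuous is monotone, even where
solutions are not unique: if `x a = x b`, the substitution `u = x t` gives
`∫ t in a..b, F (x t) ^ 2 = ∫ u in x a..x b, F u = 0`, so `F ∘ x` vanishes on `[a, b]` and `x` is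
constant there, which excludes turning points. If moreover `F` points towards an interval, then `x`
is bounded on the side towards which it moves, so it converges, and its limit is an equilibrium in
that interval. For the cascade, `h` is strictly monotone on the dither window `[x - δ, x + δ]` as
soon as `|x - x*| ≥ δ`, which gives `b₁δ x` the sign of `x - x*`. The `y`-equation is a stable
first-order filter, so its output has the same limit as its input.
-/

open Set Topology

theorem monotoneOn_or_antitoneOn_of_forall_eq_endpoints {α β : Type*}
    [ConditionallyCompleteLinearOrder α] [TopologicalSpace α] [OrderTopology α] [DenselyOrdered α]
    [LinearOrder β] [TopologicalSpace β] [OrderClosedTopology β] {f : α → β} {s : Set α}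
    (hs : s.OrdConnected) (hf : ContinuousOn f s)
    (hconst : ∀ a ∈ s, ∀ b ∈ s, f a = f b → ∀ t ∈ Icc a b, f t = f a) :
    MonotoneOn f s ∨ AntitoneOn f s := by
  by_contra hnot
  obtain ⟨a, ha, b, hb, c, hc, hab, hbc, hturn⟩ :=
    not_monotoneOn_not_antitoneOn_iff_exists_lt_lt.1 (not_or.1 hnot)
  have hlevel : f c ∈ uIcc (f a) (f b) ∨ f a ∈ uIcc (f b) (f c) := by
    simp only [mem_uIcc]
    grind
  rcases hlevel with hfc | hfa
  · obtain ⟨r, hr, hrc⟩ := intermediate_value_uIcc (hf.mono (hs.uIcc_subset ha hb)) hfc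
    rw [uIcc_of_le hab.le] at hr
    have hbr := hconst r (hs.out ha hb hr) c hc hrc b ⟨hr.2, hbc.le⟩
    grind
  · obtain ⟨r, hr, hra⟩ := intermediate_value_uIcc (hf.mono (hs.uIcc_subset hb hc)) hfa
    rw [uIcc_of_le hbc.le] at hr
    have hba := hconst a ha r (hs.out hb hc hr) hra.symm b ⟨hab.le, hr.1⟩
    grind

theorem exists_tendsto_of_monotoneOn_Ici {α β : Type*} [LinearOrder α]
    [ConditionallyCompleteLattice β] [TopologicalSpace β] [SupConvergenceClass β] {x : α → β}
    {t₀ : α} {b : β} (hmono : MonotoneOn x (Ici t₀))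
    (hb : ∀ t ≥ t₀, x t ≤ b) : ∃ l, Tendsto x atTop (𝓝 l) :=
  ⟨_, tendsto_comp_val_Ici_atTop.1 <| tendsto_atTop_ciSup (monotoneOn_iff_monotone.1 hmono)
    ⟨b, forall_mem_range.2 fun t => hb t t.2⟩⟩

theorem exists_forall_norm_le_of_tendsto_atTop {E : Type*} [SeminormedAddCommGroup E]
    {z : ℝ → E} {t₀ : ℝ} {l : E} (hz : ContinuousOn z (Ici t₀)) (hl : Tendsto z atTop (𝓝 l)) :
    ∃ M, ∀ t ≥ t₀, ‖z t‖ ≤ M := by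
  obtain ⟨M₁, hM₁⟩ := hl.norm.isBoundedUnder_le
  obtain ⟨T, hT⟩ := eventually_atTop.1 (eventually_map.1 hM₁)
  obtain ⟨M₂, hM₂⟩ := isCompact_Icc.exists_bound_of_continuousOn
    (hz.mono (Icc_subset_Ici_self : Icc t₀ T ⊆ Ici t₀))
  refine ⟨max M₁ M₂, fun t ht => ?_⟩
  rcases le_total T t with hTt | htT
  · exact le_max_of_le_left (hT t hTt)
  · exact le_max_of_le_right (hM₂ t ⟨ht, htT⟩)

theorem eq_zero_of_tendsto_of_tendsto_hasDerivWithinAt {E : Type*} [NormedAddCommGroup E]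
    [NormedSpace ℝ E] {x x' : ℝ → E} {t₀ : ℝ} {l m : E}
    (hx : ∀ t ≥ t₀, HasDerivWithinAt x (x' t) (Ici t₀) t) (hl : Tendsto x atTop (𝓝 l))
    (hm : Tendsto x' atTop (𝓝 m)) : m = 0 := by
  have hincr : Tendsto (fun t => ‖x (t + 1) - x t - m‖) atTop (𝓝 ‖m‖) := by
    simpa using (((hl.comp (tendsto_atTop_add_const_right _ 1 tendsto_id)).sub hl).sub_const m).norm
  refine norm_le_zero_iff.1 (le_of_forall_pos_le_add fun ε hε => ?_)
  obtain ⟨T, hT⟩ := eventually_atTop.1 (hm.eventually (Metric.closedBall_mem_nhds m hε))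
  rw [zero_add]
  refine le_of_tendsto hincr ?_
  filter_upwards [eventually_ge_atTop (max t₀ T)] with t ht
  obtain ⟨ht₀t, hTt⟩ := max_le_iff.1 ht
  have hderiv : ∀ s ∈ Icc t (t + 1),
      HasDerivWithinAt (fun s => x s - s • m) (x' s - m) (Icc t (t + 1)) s := fun s hs => by
    simpa using ((hx s (ht₀t.trans hs.1)).mono fun r hr => ht₀t.trans hr.1).fun_sub
      ((hasDerivWithinAt_id s _).smul_const m)
  have hbound : ∀ s ∈ Ico t (t + 1), ‖x' s - m‖ ≤ ε := fun s hs => by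
    simpa [dist_eq_norm] using hT s (hTt.trans hs.1)
  have hseg := norm_image_sub_le_of_norm_deriv_le_segment' hderiv hbound (t + 1)
    (right_mem_Icc.2 (by linarith))
  rwa [show x (t + 1) - (t + 1) • m - (x t - t • m) = x (t + 1) - x t - m by module,
    add_sub_cancel_left, mul_one] at hseg

section ScalarAutonomous

variable {F x : ℝ → ℝ}

theorem eq_zero_of_isIntegralCurveOn_of_eq_endpoints (hF : Continuous F) {a b : ℝ} (hab : a < b)
    (hx : IsIntegralCurveOn x (fun _ => F) (Icc a b)) (hends : x a = x b) :
    ∀ t ∈ Icc a b, F (x t) = 0 := by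
  have hFx : ContinuousOn (F ∘ x) (Icc a b) := hF.comp_continuousOn hx.continuousOn
  have hintegral : ∫ t in a..b, F (x t) * F (x t) = 0 := by
    have hsubst : ∫ t in a..b, (F ∘ x) t * F (x t) = ∫ u in x a..x b, F u := by
      refine integral_comp_mul_deriv'' ?_ (fun t ht => ?_) ?_ hF.continuousOn
      · simpa only [uIcc_of_le hab.le] using hx.continuousOn
      · rw [min_eq_left hab.le, max_eq_right hab.le] at ht
        exact (hx t (Ioo_subset_Icc_self ht)).mono_of_mem_nhdsWithin
          (mem_nhdsWithin_of_mem_nhds (Icc_mem_nhds ht.1 ht.2))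
      · rwa [uIcc_of_le hab.le]
    simpa [hends] using hsubst
  intro t ht
  by_contra hne
  exact (intervalIntegral.integral_pos hab (hFx.mul hFx) (fun s _ => mul_self_nonneg _)
    ⟨t, ht, mul_self_pos.2 hne⟩).ne' hintegral

theorem eq_left_of_isIntegralCurveOn_of_eq_endpoints (hF : Continuous F) {a b : ℝ}
    (hx : IsIntegralCurveOn x (fun _ => F) (Icc a b)) (hends : x a = x b) :
    ∀ t ∈ Icc a b, x t = x a := by
  refine constant_of_has_deriv_right_zero hx.continuousOn fun t ht => ?_
  have hderiv : HasDerivWithinAt x (F (x t)) (Icc a b) t := hx t (Ico_subset_Icc_self ht)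
  rw [eq_zero_of_isIntegralCurveOn_of_eq_endpoints hF (ht.1.trans_lt ht.2) hx hends t
    (Ico_subset_Icc_self ht)] at hderiv
  exact hderiv.mono_of_mem_nhdsWithin (Icc_mem_nhdsGE_of_mem ht)

theorem monotoneOn_or_antitoneOn_of_isIntegralCurveOn (hF : Continuous F) {s : Set ℝ}
    (hs : s.OrdConnected) (hx : IsIntegralCurveOn x (fun _ => F) s) :
    MonotoneOn x s ∨ AntitoneOn x s :=
  monotoneOn_or_antitoneOn_of_forall_eq_endpoints hs hx.continuousOn fun _ ha _ hb =>
    eq_left_of_isIntegralCurveOn_of_eq_endpoints hF (hx.mono (hs.out ha hb))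

theorem exists_tendsto_of_isIntegralCurveOn_of_monotoneOn {t₀ b : ℝ} (hb : ∀ u > b, F u < 0)
    (hx : IsIntegralCurveOn x (fun _ => F) (Ici t₀)) (hmono : MonotoneOn x (Ici t₀)) :
    ∃ l, Tendsto x atTop (𝓝 l) := by
  refine exists_tendsto_of_monotoneOn_Ici (b := b) hmono fun t ht => ?_
  have hnonneg : 0 ≤ F (x t) := by
    have hderiv : derivWithin x (Ici t₀) t = F (x t) :=
      (hx t ht).derivWithin (uniqueDiffOn_Ici t₀ t ht)
    exact hderiv ▸ hmono.derivWithin_nonneg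
  exact not_lt.1 fun hlt => (hb (x t) hlt).not_ge hnonneg

theorem exists_tendsto_equilibrium_of_isIntegralCurveOn (hF : Continuous F) {t₀ a b : ℝ}
    (ha : ∀ u < a, 0 < F u) (hb : ∀ u > b, F u < 0)
    (hx : IsIntegralCurveOn x (fun _ => F) (Ici t₀)) :
    ∃ l ∈ Icc a b, F l = 0 ∧ Tendsto x atTop (𝓝 l) := by
  have hconv : ∃ l, Tendsto x atTop (𝓝 l) := by
    rcases monotoneOn_or_antitoneOn_of_isIntegralCurveOn hF ordConnected_Ici hx with hmono | hanti
    · exact exists_tendsto_of_isIntegralCurveOn_of_monotoneOn hb hx hmono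
    · have hreflect : IsIntegralCurveOn (-x) (fun _ u => -F (-u)) (Ici t₀) := fun t ht => by
        simpa using (hx t ht).neg
      obtain ⟨l, hl⟩ := exists_tendsto_of_isIntegralCurveOn_of_monotoneOn (b := -a)
        (fun u hu => neg_neg_of_pos (ha _ (neg_lt.1 hu))) hreflect hanti.neg
      exact ⟨-l, by simpa using hl.neg⟩
  obtain ⟨l, hl⟩ := hconv
  have hFl : F l = 0 :=
    eq_zero_of_tendsto_of_tendsto_hasDerivWithinAt hx hl ((hF.tendsto l).comp hl)
  refine ⟨l, ⟨?_, ?_⟩, hFl, hl⟩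
  · exact not_lt.1 fun hlt => (ha l hlt).ne' hFl
  · exact not_lt.1 fun hlt => (hb l hlt).ne hFl

end ScalarAutonomous

section FirstOrderFilter

variable {E : Type*} [NormedAddCommGroup E] [NormedSpace ℝ E] {y u : ℝ → E} {γ : ℝ} {L : E}

theorem norm_sub_le_of_isIntegralCurveOn_filter (hγ : 0 ≤ γ) {T ε : ℝ}
    (hy : IsIntegralCurveOn y (fun t z => γ • (u t - z)) (Ici T))
    (hu : ∀ t ≥ T, ‖u t - L‖ ≤ ε) {t : ℝ} (ht : T ≤ t) :
    ‖y t - L‖ ≤ ‖y T - L‖ * exp (-(γ * (t - T))) + ε := by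
  have hε : 0 ≤ ε := (norm_nonneg _).trans (hu T le_rfl)
  have hexp (s : ℝ) : HasDerivAt (fun s => exp (γ * (s - T))) (γ * exp (γ * (s - T))) s := by
    simpa [mul_comm] using (((hasDerivAt_id s).sub_const T).const_mul γ).exp
  have hweighted : ∀ s ≥ T, HasDerivWithinAt (fun s => exp (γ * (s - T)) • (y s - L))
      ((γ * exp (γ * (s - T))) • (u s - L)) (Ici T) s := fun s hs =>
    ((hexp s).hasDerivWithinAt.smul ((hy s hs).sub_const L)).congr_deriv (by module)
  have hfence : ‖exp (γ * (t - T)) • (y t - L)‖ ≤ ‖y T - L‖ + ε * exp (γ * (t - T)) := by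
    refine image_norm_le_of_norm_deriv_right_le_deriv_boundary
      (f := fun s => exp (γ * (s - T)) • (y s - L))
      (B := fun s => ‖y T - L‖ + ε * exp (γ * (s - T)))
      (fun s hs => ((hweighted s hs.1).mono Icc_subset_Ici_self).continuousWithinAt)
      (fun s hs => (hweighted s hs.1).mono (Ici_subset_Ici.2 hs.1))
      (by simpa using hε) (fun s => ((hexp s).const_mul ε).const_add _)
      (fun s hs => ?_) (right_mem_Icc.2 ht)
    rw [norm_smul, Real.norm_of_nonneg (by positivity), mul_comm ε]
    gcongr
    exact hu s hs.1
  rw [norm_smul, Real.norm_of_nonneg (exp_pos _).le] at hfence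
  rw [exp_neg, ← div_eq_mul_inv, ← sub_le_iff_le_add, le_div_iff₀ (exp_pos _)]
  linarith

theorem tendsto_of_isIntegralCurveOn_filter (hγ : 0 < γ) {t₀ : ℝ}
    (hy : IsIntegralCurveOn y (fun t z => γ • (u t - z)) (Ici t₀))
    (hu : Tendsto u atTop (𝓝 L)) : Tendsto y atTop (𝓝 L) := by
  refine Metric.tendsto_nhds.2 fun ε hε => ?_
  obtain ⟨T, hT⟩ := eventually_atTop.1 ((eventually_ge_atTop t₀).and
    (hu.eventually (Metric.closedBall_mem_nhds L (half_pos hε))))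
  have hu_near : ∀ t ≥ T, ‖u t - L‖ ≤ ε / 2 := fun t ht => by
    simpa [dist_eq_norm] using (hT t ht).2
  have htransient : Tendsto (fun t => ‖y T - L‖ * exp (-(γ * (t - T)))) atTop (𝓝 0) := by
    simpa [sub_eq_add_neg] using (tendsto_exp_neg_atTop_nhds_zero.comp
      ((tendsto_atTop_add_const_right _ (-T) tendsto_id).const_mul_atTop hγ)).const_mul ‖y T - L‖
  filter_upwards [eventually_ge_atTop T, htransient.eventually (gt_mem_nhds (half_pos hε))]
    with t ht hsmall
  have hle := norm_sub_le_of_isIntegralCurveOn_filter hγ.le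
    (hy.mono (Ici_subset_Ici.2 (hT T le_rfl).1)) hu_near ht
  rw [dist_eq_norm]
  linarith

end FirstOrderFilter

section FourierCoefficients

variable {h : ℝ → ℝ}

theorem continuous_b1 (hh : Continuous h) (δ : ℝ) : Continuous (b1 h δ) := by
  unfold b1
  refine continuous_const.mul (continuous_parametric_intervalIntegral_of_continuous' ?_ _ _)
  simp only [Function.uncurry_def]
  fun_prop

theorem continuous_a0 (hh : Continuous h) (δ : ℝ) : Continuous (a0 h δ) := by
  unfold a0
  refine continuous_const.mul (continuous_parametric_intervalIntegral_of_continuous' ?_ _ _)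
  simp only [Function.uncurry_def]
  fun_prop

theorem b1_fun_neg (h : ℝ → ℝ) (δ x : ℝ) : b1 (fun u => -h u) δ x = -b1 h δ x := by
  simp [b1]

theorem integral_sin_two_pi_mul : ∫ t in (0 : ℝ)..1, sin (2 * π * t) = 0 := by
  rw [integral_comp_mul_left sin (by positivity)]
  simp

theorem b1_fun_sub_const (hh : Continuous h) (c δ x : ℝ) :
    b1 (fun u => h u - c) δ x = b1 h δ x := by
  simp only [b1, sub_mul]
  rw [intervalIntegral.integral_sub, intervalIntegral.integral_const_mul, integral_sin_two_pi_mul,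
    mul_zero, sub_zero]
  all_goals exact Continuous.intervalIntegrable (by fun_prop) _ _

theorem b1_pos_of_strictMonoOn (hh : Continuous h) {δ x : ℝ} (hδ : 0 < δ)
    (hmono : StrictMonoOn h (Icc (x - δ) (x + δ))) : 0 < b1 h δ x := by
  have hwindow : ∀ s ∈ Icc (-1 : ℝ) 1, x + δ * s ∈ Icc (x - δ) (x + δ) := fun s hs =>
    ⟨by nlinarith [hs.1], by nlinarith [hs.2]⟩
  have hx : x ∈ Icc (x - δ) (x + δ) := ⟨by linarith, by linarith⟩
  have hnonneg : ∀ s ∈ Icc (-1 : ℝ) 1, 0 ≤ (h (x + δ * s) - h x) * s := fun s hs => by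
    rcases le_total 0 s with hs₀ | hs₀
    · have := hmono.monotoneOn hx (hwindow s hs) (by nlinarith)
      exact mul_nonneg (by linarith) hs₀
    · have := hmono.monotoneOn (hwindow s hs) hx (by nlinarith)
      exact mul_nonneg_of_nonpos_of_nonpos (by linarith) hs₀
  rw [← b1_fun_sub_const hh (h x)]
  refine mul_pos two_pos (intervalIntegral.integral_pos one_pos (by fun_prop)
    (fun t _ => hnonneg _ (sin_mem_Icc _)) ⟨1 / 4, by norm_num, ?_⟩)
  rw [show 2 * π * (1 / 4) = π / 2 by ring, sin_pi_div_two, mul_one, mul_one, sub_pos]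
  exact hmono hx (right_mem_Icc.2 (by linarith)) (by linarith)

theorem b1_neg_of_strictAntiOn (hh : Continuous h) {δ x : ℝ} (hδ : 0 < δ)
    (hanti : StrictAntiOn h (Icc (x - δ) (x + δ))) : b1 h δ x < 0 := by
  rw [← neg_pos, ← b1_fun_neg]
  exact b1_pos_of_strictMonoOn hh.neg hδ hanti.neg

end FourierCoefficients

section StrictUnimodality

variable {h : ℝ → ℝ} {c : ℝ}

theorem injOn_of_forall_le_abs_sub {α : ℝ → ℝ} {s : Set ℝ} (hα : ∀ r > 0, 0 < α r)
    (hlb : ∀ x₁ ∈ s, ∀ x₂ ∈ s, α |x₂ - x₁| ≤ |h x₂ - h x₁|) : InjOn h s := by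
  intro x₁ hx₁ x₂ hx₂ heq
  by_contra hne
  have hpos := hα |x₂ - x₁| (abs_sub_pos.2 (Ne.symm hne))
  have hle := hlb x₁ hx₁ x₂ hx₂
  rw [heq, sub_self, abs_zero] at hle
  exact hle.not_gt hpos

theorem strictMonoOn_Ici_of_injOn (hh : ContinuousOn h (Ici c)) (hinj : InjOn h (Ici c))
    (hmin : IsMinOn h (Ici c) c) : StrictMonoOn h (Ici c) := fun _ ha _ hb hab =>
  hh.mono Icc_subset_Ici_self |>.strictMonoOn_of_injOn_Icc hb (hmin hb)
    (hinj.mono Icc_subset_Ici_self) ⟨ha, hab.le⟩ (right_mem_Icc.2 hb) hab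

theorem strictAntiOn_Iic_of_injOn (hh : ContinuousOn h (Iic c)) (hinj : InjOn h (Iic c))
    (hmin : IsMinOn h (Iic c) c) : StrictAntiOn h (Iic c) := fun _ ha _ hb hab =>
  hh.mono Icc_subset_Iic_self |>.strictAntiOn_of_injOn_Icc ha (hmin ha)
    (hinj.mono Icc_subset_Iic_self) (left_mem_Icc.2 ha) ⟨hab.le, hb⟩ hab

theorem strictAntiOn_Iic_and_strictMonoOn_Ici (hh : Continuous h) (hmin : ∀ x, h c ≤ h x)
    {α : ℝ → ℝ} (hα : ∀ r > 0, 0 < α r)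
    (hlb : ∀ x₁ x₂, (x₁ - c) * (x₂ - c) ≥ 0 → α |x₂ - x₁| ≤ |h x₂ - h x₁|) :
    StrictAntiOn h (Iic c) ∧ StrictMonoOn h (Ici c) := by
  constructor
  · refine strictAntiOn_Iic_of_injOn hh.continuousOn ?_ fun x _ => hmin x
    exact injOn_of_forall_le_abs_sub hα fun x₁ hx₁ x₂ hx₂ =>
      hlb x₁ x₂ (mul_nonneg_of_nonpos_of_nonpos (sub_nonpos.2 hx₁) (sub_nonpos.2 hx₂))
  · refine strictMonoOn_Ici_of_injOn hh.continuousOn ?_ fun x _ => hmin x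
    exact injOn_of_forall_le_abs_sub hα fun x₁ hx₁ x₂ hx₂ =>
      hlb x₁ x₂ (mul_nonneg (sub_nonneg.2 hx₁) (sub_nonneg.2 hx₂))

end StrictUnimodality

theorem cascade_average_convergence_general {h : ℝ → ℝ} (hh : Continuous h) {xstar : ℝ}
    (hanti : StrictAntiOn h (Iic xstar)) (hmono : StrictMonoOn h (Ici xstar))
    {δ γ : ℝ} (hδ : 0 < δ) (hγ : 0 < γ) {xa ya : ℝ → ℝ}
    (hx : IsIntegralCurveOn xa (fun _ x => -(γ / 2) * b1 h δ x) (Ici 0))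
    (hy : IsIntegralCurveOn ya (fun t y => -γ * y + γ * a0 h δ (xa t) / 2) (Ici 0)) :
    (∃ M : ℝ, ∀ t : ℝ, 0 ≤ t → |xa t| ≤ M ∧ |ya t| ≤ M) ∧
    (∃ xhat ∈ Icc (xstar - δ) (xstar + δ), b1 h δ xhat = 0 ∧
      Tendsto xa atTop (𝓝 xhat) ∧ Tendsto ya atTop (𝓝 (a0 h δ xhat / 2))) := by
  obtain ⟨xhat, hmem, hzero, hxlim⟩ := exists_tendsto_equilibrium_of_isIntegralCurveOn
    (a := xstar - δ) (b := xstar + δ) (continuous_const.mul (continuous_b1 hh δ))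
    (fun x hlt => mul_pos_of_neg_of_neg (by linarith) <| b1_neg_of_strictAntiOn hh hδ <|
      hanti.mono fun _ hs => mem_Iic.2 (by linarith [hs.2]))
    (fun x hgt => mul_neg_of_neg_of_pos (by linarith) <| b1_pos_of_strictMonoOn hh hδ <|
      hmono.mono fun _ hs => mem_Ici.2 (by linarith [hs.1])) hx
  have hylim : Tendsto ya atTop (𝓝 (a0 h δ xhat / 2)) :=
    tendsto_of_isIntegralCurveOn_filter (u := fun t => a0 h δ (xa t) / 2) hγ
      (fun t ht => (hy t ht).congr_deriv (by simp only [smul_eq_mul]; ring))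
      ((((continuous_a0 hh δ).tendsto xhat).comp hxlim).div_const 2)
  obtain ⟨M, hM⟩ := exists_forall_norm_le_of_tendsto_atTop
    (hx.continuousOn.prodMk hy.continuousOn) (hxlim.prodMk_nhds hylim)
  exact ⟨⟨M, fun t ht => norm_prod_le_iff.1 (hM t ht)⟩, xhat, hmem,
    (mul_eq_zero.1 hzero).resolve_left (by linarith), hxlim, hylim⟩

/-- Lemma 2(a), concrete form: every solution of the cascade average system
is bounded and converges to an equilibrium over `[x* - δ, x* + δ]`. -/
theorem cascade_average_convergence (h : ℝ → ℝ) (hsmooth : ContDiff ℝ (⊤ : ℕ∞) h)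
    (xstar : ℝ) (hmin : ∀ x : ℝ, x ≠ xstar → h xstar < h x)
    (α : ℝ → ℝ) (hα_cont : ContinuousOn α (Set.Ici 0))
    (hα_mono : StrictMonoOn α (Set.Ici 0)) (hα0 : α 0 = 0)
    (hα_top : Tendsto α atTop atTop)
    (hlb : ∀ x₁ x₂ : ℝ, (x₁ - xstar) * (x₂ - xstar) ≥ 0 → α |x₂ - x₁| ≤ |h x₂ - h x₁|)
    (δ γ : ℝ) (hδ : 0 < δ) (hγ : 0 < γ)
    (xa ya : ℝ → ℝ) (hdx : Differentiable ℝ xa) (hdy : Differentiable ℝ ya)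
    (hsolx : ∀ t : ℝ, 0 ≤ t → HasDerivAt xa (-(γ / 2) * b1 h δ (xa t)) t)
    (hsoly : ∀ t : ℝ, 0 ≤ t → HasDerivAt ya (-γ * ya t + γ * a0 h δ (xa t) / 2) t) :
    (∃ M : ℝ, ∀ t : ℝ, 0 ≤ t → |xa t| ≤ M ∧ |ya t| ≤ M) ∧
    (∃ xhat ∈ Set.Icc (xstar - δ) (xstar + δ), b1 h δ xhat = 0 ∧
      Tendsto xa atTop (nhds xhat) ∧ Tendsto ya atTop (nhds (a0 h δ xhat / 2))) := by
  obtain ⟨hanti, hmono⟩ := strictAntiOn_Iic_and_strictMonoOn_Ici hsmooth.continuous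
    (fun x => (eq_or_ne x xstar).elim (fun heq => heq ▸ le_rfl) fun hne => (hmin x hne).le)
    (fun r hr => hα0 ▸ hα_mono self_mem_Ici hr.le hr) hlb
  exact cascade_average_convergence_general hsmooth.continuous hanti hmono hδ hγ
    (fun t ht => (hsolx t ht).hasDerivWithinAt) (fun t ht => (hsoly t ht).hasDerivWithinAt)
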